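/- Let F be an algebraically closed field and fix n ≥ 1. Let I be the ideal of R = MvPolynomial ((Fin n × Fin n) ⊕ (Fin n × Fin n) ⊕ (Fin n × Fin n)) F generated by the 3n² entries of the pairwise commutators X*Y − Y*X, X*Z − Z*X, Y*Z − Z*Y of the three generic n×n matrices X, Y, Z. If the radical of I is a prime ideal (i.e. the variety of commuting triples of n×n matrices is irreducible), then for all pairwise commuting n×n matrices A, B, C over F, the F-vector space dimension of the unital subalgebra generated by A, B, C is at most n. -/

import Mathlib

/-!
Let `S` be the coordinate ring of the reduced variety of commuting triples, a domain by hypothesis,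
and let `x`, `y`, `z` be the tautological commuting matrices over `S`. The variety contains a triple
`(P, P, P)` where `P` has a cyclic vector `e`, so the vectors `x ^ k e` with `k < n` are linearly
independent over `S`. A matrix commuting with `x` is then determined by its value at `e`, hence the
centralizer of `x` has rank at most `n` over `S`. It contains every polynomial in `x`, `y`, `z`. Any
commuting triple `(A, B, C)` is the image of `(x, y, z)` under a ring homomorphism out of `S`, and
linear independence of the images over a field lifts to linear independence over the domain `S`, so
that `A`, `B`, `C` generate an algebra of dimension at most `n`.
-/

open Matrix Module

section Specialization

theorem exists_submatrix_det_ne_zero {K κ ι : Type*} [Field K] [Fintype κ] [DecidableEq κ]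
    {A : Matrix κ ι K} (hA : LinearIndependent K A.row) :
    ∃ e : κ → ι, (A.submatrix id e).det ≠ 0 := by
  obtain ⟨κ', a, -, hspan, hli⟩ := exists_linearIndependent' K A.col
  have htop : Submodule.span K (Set.range (A.col ∘ a)) = ⊤ :=
    hspan.trans (span_flip_eq_top_iff_linearIndependent.mpr hA)
  let e : κ ≃ κ' := (Pi.basisFun K κ).indexEquiv (Basis.mk hli htop.ge)
  have hcol : LinearIndependent K (A.submatrix id (a ∘ e)).col := hli.comp e e.injective
  exact ⟨a ∘ e, (isUnit_iff_isUnit_det _ |>.mp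
    (linearIndependent_cols_iff_isUnit.mp hcol)).ne_zero⟩

variable {S K M V : Type*} [CommRing S] [IsDomain S] [Field K] {φ : S →+* K}
  [AddCommGroup M] [Module S M] [Module.Free S M] [AddCommGroup V] [Module K V]

/- A nonvanishing maximal minor of the images is the image of a minor of the given vectors. -/
theorem linearIndependent_of_semilinear_comp {κ : Type*} {w : κ → M} (f : M →ₛₗ[φ] V)
    (h : LinearIndependent K (f ∘ w)) : LinearIndependent S w := by
  classical
  rw [linearIndependent_iff_finset_linearIndependent] at h ⊢
  intro s
  let b := Module.Free.chooseBasis S M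
  let A : Matrix s _ S := of fun k i => b.repr (w k) i
  have hA : LinearIndependent K (A.map φ).row := by
    have hsum (k : s) : f (w k) = Finsupp.linearCombination K (f ∘ b)
        ((b.repr (w k)).mapRange φ φ.map_zero) := by
      conv_lhs => rw [← b.linearCombination_repr (w k)]
      rw [Finsupp.linearCombination_apply, Finsupp.linearCombination_apply,
        Finsupp.sum_mapRange_index (by simp), map_finsuppSum]
      simp only [map_smulₛₗ, Function.comp_apply]
    have hrepr : LinearIndependent K fun k : s => (b.repr (w k)).mapRange φ φ.map_zero :=
      .of_comp (Finsupp.linearCombination K (f ∘ b)) (by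
        convert h s using 1
        exact funext fun k => (hsum k).symm)
    exact hrepr.map' Finsupp.lcoeFun (LinearMap.ker_eq_bot.mpr DFunLike.coe_injective)
  obtain ⟨e, he⟩ := exists_submatrix_det_ne_zero hA
  have hdet : (A.submatrix id e).det ≠ 0 := by
    intro h0
    apply he
    rw [submatrix_map, ← RingHom.mapMatrix_apply, ← RingHom.map_det, h0, map_zero]
  exact .of_comp (LinearMap.pi fun j => b.coord (e j)) (linearIndependent_rows_of_det_ne_zero hdet)

theorem finrank_span_image_le [Module.Finite S M] (f : M →ₛₗ[φ] V) (N : Submodule S M) :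
    finrank K (Submodule.span K (f '' N)) ≤ finrank S N := by
  obtain ⟨t, ht, hspan, hli⟩ := exists_linearIndependent K (f '' N)
  choose g hgN hg using fun v : t => ht v.2
  have hfg : f ∘ g = ((↑) : t → V) := funext hg
  have hg_li : LinearIndependent S g := linearIndependent_of_semilinear_comp f (hfg ▸ hli)
  have hgN_li : LinearIndependent S fun v : t => (⟨g v, hgN v⟩ : N) :=
    .of_comp N.subtype hg_li
  have hN : Module.rank S N < Cardinal.aleph0 := (Submodule.rank_le N).trans_lt (rank_lt_aleph0 S M)
  have hle := Cardinal.toNat_le_toNat hgN_li.cardinal_lift_le_rank (Cardinal.lift_lt_aleph0.mpr hN)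
  rw [Cardinal.toNat_lift, Cardinal.toNat_lift] at hle
  rwa [← hspan, finrank, rank_span_set hli]

end Specialization

section CyclicVector

variable {m R : Type*} [Fintype m] [DecidableEq m] [CommRing R]

/-- `v` is a cyclic vector of `A`: the first `n` of the vectors `v, A v, A² v, …` are linearly
independent, where `n` is the size of `A`. Over a field they then span the whole space; over a
domain they do so after inverting nonzero scalars. -/
def IsCyclicVector (A : Matrix m m R) (v : m → R) : Prop :=
  LinearIndependent R fun k : Fin (Fintype.card m) => A ^ (k : ℕ) *ᵥ v

namespace IsCyclicVector

theorem eq_zero_of_commute {A W : Matrix m m R} {v : m → R} (hv : IsCyclicVector A v)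
    (hAW : Commute A W) (hW : W *ᵥ v = 0) : W = 0 := by
  let e := Fintype.equivFin m
  let P : Matrix m m R := of fun i j => (A ^ (e j : ℕ) *ᵥ v) i
  have hP : P.Nonsingular := .of_linearIndependent_col (hv.comp e e.injective)
  have hWP : W * P = 0 := by
    ext i j
    calc (W * P) i j = (W *ᵥ A ^ (e j : ℕ) *ᵥ v) i := rfl
      _ = (A ^ (e j : ℕ) *ᵥ W *ᵥ v) i := by
        rw [mulVec_mulVec, ← (hAW.pow_left _).eq, ← mulVec_mulVec]
      _ = 0 := by simp [hW]
  exact isRightRegular_iff_nonsingular.mpr hP (hWP.trans (zero_mul P).symm)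

theorem finrank_centralizer_le [Nontrivial R] {A : Matrix m m R} {v : m → R}
    (hv : IsCyclicVector A v) :
    finrank R (Subalgebra.centralizer R {A}) ≤ Fintype.card m := by
  let evalAt : Subalgebra.centralizer R {A} →ₗ[R] m → R :=
    (mulVecBilin R R).flip v ∘ₗ (Subalgebra.centralizer R {A}).val.toLinearMap
  have hinj : Function.Injective evalAt := by
    refine (injective_iff_map_eq_zero evalAt).mpr fun W hW => Subtype.ext ?_
    exact hv.eq_zero_of_commute (Subalgebra.mem_centralizer_iff R |>.mp W.2 A rfl) hW
  simpa using LinearMap.finrank_le_finrank_of_injective hinj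

theorem of_map {S K : Type*} [CommRing S] [IsDomain S] [Field K] (φ : S →+* K)
    {A : Matrix m m S} {v : m → S} (h : IsCyclicVector (φ.mapMatrix A) (φ ∘ v)) :
    IsCyclicVector A v := by
  let mapVec : (m → S) →ₛₗ[φ] m → K :=
    { toFun := fun w => φ ∘ w
      map_add' := fun _ _ => funext fun _ => map_add φ _ _
      map_smul' := fun _ _ => funext fun _ => map_mul φ _ _ }
  have hmap : (mapVec ∘ fun k : Fin (Fintype.card m) => A ^ (k : ℕ) *ᵥ v) =
      fun k : Fin (Fintype.card m) => φ.mapMatrix A ^ (k : ℕ) *ᵥ (φ ∘ v) := by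
    ext k i
    rw [← map_pow]
    exact RingHom.map_mulVec φ _ _ _
  exact linearIndependent_of_semilinear_comp mapVec (hmap ▸ h)

/- Products of images of matrices commuting with `A` are again such images, so every element of the
algebra is a linear combination of such images. -/
theorem finrank_adjoin_range_le {ι S K : Type*} [CommRing S] [IsDomain S] [Field K] (φ : S →+* K)
    {A : Matrix m m S} {v : m → S} (hv : IsCyclicVector A v) {X : ι → Matrix m m S}
    (hX : ∀ i, Commute A (X i)) :
    finrank K (Algebra.adjoin K (Set.range fun i => φ.mapMatrix (X i))) ≤ Fintype.card m := by
  let C := Subalgebra.centralizer S {A}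
  let P := C.toSubmonoid.map φ.mapMatrix.toMonoidHom
  have hP : Submonoid.closure (Set.range fun i => φ.mapMatrix (X i)) ≤ P :=
    Submonoid.closure_le.mpr <| Set.range_subset_iff.mpr fun i =>
      ⟨X i, (Subalgebra.mem_centralizer_iff S).mpr fun _ h => h ▸ hX i, rfl⟩
  rw [← Subalgebra.finrank_toSubmodule, Algebra.adjoin_eq_span]
  calc finrank K (Submodule.span K (Submonoid.closure (Set.range fun i => φ.mapMatrix (X i)) :
        Set (Matrix m m K)))
      ≤ finrank K (Submodule.span K (P : Set (Matrix m m K))) :=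
        Submodule.finrank_mono (Submodule.span_mono hP)
    _ ≤ finrank S C :=
      finrank_span_image_le φ.toSemilinearMap.mapMatrix (Subalgebra.toSubmodule C)
    _ ≤ Fintype.card m := hv.finrank_centralizer_le

end IsCyclicVector

theorem exists_isCyclicVector_single (R : Type*) [CommRing R] (i : m) :
    ∃ A : Matrix m m R, IsCyclicVector A (Pi.single i 1) := by
  obtain ⟨σ, hσ, -⟩ := Finset.exists_cycleOn (Finset.univ : Finset m)
  have hinj : Function.Injective fun k : Fin (Fintype.card m) => (σ ^ (k : ℕ)) i := fun k l hkl =>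
    Fin.ext (((hσ.pow_apply_eq_pow_apply (Finset.mem_univ i)).mp hkl).eq_of_lt_of_lt k.2 l.2)
  have horbit : (fun k : Fin (Fintype.card m) => permMatrixHom σ ^ (k : ℕ) *ᵥ Pi.single i 1) =
      fun k : Fin (Fintype.card m) => Pi.basisFun R m ((σ ^ (k : ℕ)) i) := by
    ext k j
    rw [← map_pow, permMatrixHom_apply, permMatrix_mulVec]
    simp [Pi.single_apply, Equiv.eq_symm_apply, eq_comm]
  refine ⟨permMatrixHom σ, ?_⟩
  rw [IsCyclicVector, horbit]
  exact (Pi.basisFun R m).linearIndependent.comp _ hinj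

end CyclicVector

section CommutingVariety

variable {ι m R : Type*} [Fintype m] [DecidableEq m] [CommRing R]

/-- The ideal generated by the entries of all commutators of the family `X`. For a family of generic
matrices its zero set is the variety of commuting tuples. -/
def commutatorIdeal (X : ι → Matrix m m R) : Ideal R :=
  Ideal.span {p | ∃ i j a b, p = (X i * X j - X j * X i) a b}

theorem map_commutator_apply_eq_zero_iff {T : Type*} [CommRing T] {φ : R →+* T}
    {A B : Matrix m m R} :
    (∀ a b, φ ((A * B - B * A) a b) = 0) ↔ Commute (φ.mapMatrix A) (φ.mapMatrix B) := by
  rw [commute_iff_eq, ← sub_eq_zero, ← map_mul, ← map_mul, ← map_sub, ← Matrix.ext_iff]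
  rfl

theorem commutatorIdeal_le_ker_iff {T : Type*} [CommRing T] {X : ι → Matrix m m R} {φ : R →+* T} :
    commutatorIdeal X ≤ RingHom.ker φ ↔
      ∀ i j, Commute (φ.mapMatrix (X i)) (φ.mapMatrix (X j)) := by
  simp_rw [← map_commutator_apply_eq_zero_iff]
  rw [commutatorIdeal, Ideal.span_le]
  exact ⟨fun h i j a b => h ⟨i, j, a, b, rfl⟩, fun h _ ⟨i, j, a, b, hp⟩ => hp ▸ h i j a b⟩

omit [DecidableEq m] in
theorem commutatorIdeal_vecCons_three (X Y Z : Matrix m m R) :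
    commutatorIdeal ![X, Y, Z] = Ideal.span
      ({p | ∃ i j, p = (X * Y - Y * X) i j} ∪ {p | ∃ i j, p = (X * Z - Z * X) i j} ∪
        {p | ∃ i j, p = (Y * Z - Z * Y) i j}) := by
  classical
  refine le_antisymm ?_ (Ideal.span_mono ?_)
  · set J : Ideal R := Ideal.span
      ({p | ∃ i j, p = (X * Y - Y * X) i j} ∪ {p | ∃ i j, p = (X * Z - Z * X) i j} ∪
        {p | ∃ i j, p = (Y * Z - Z * Y) i j})
    have commute_mk {A B : Matrix m m R} (h : ∀ a b, (A * B - B * A) a b ∈ J) :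
        Commute ((Ideal.Quotient.mk J).mapMatrix A) ((Ideal.Quotient.mk J).mapMatrix B) :=
      map_commutator_apply_eq_zero_iff.mp fun a b => Ideal.Quotient.eq_zero_iff_mem.mpr (h a b)
    have hXY := commute_mk fun a b => Ideal.subset_span (.inl (.inl ⟨a, b, rfl⟩))
    have hXZ := commute_mk fun a b => Ideal.subset_span (.inl (.inr ⟨a, b, rfl⟩))
    have hYZ := commute_mk fun a b => Ideal.subset_span (.inr ⟨a, b, rfl⟩)
    rw [← Ideal.mk_ker (I := J), commutatorIdeal_le_ker_iff]
    simp [Fin.forall_fin_succ, -RingHom.mapMatrix_apply, hXY, hXZ, hYZ, hXY.symm, hXZ.symm,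
      hYZ.symm]
  · rintro p ((⟨a, b, rfl⟩ | ⟨a, b, rfl⟩) | ⟨a, b, rfl⟩)
    exacts [⟨0, 1, a, b, rfl⟩, ⟨0, 2, a, b, rfl⟩, ⟨1, 2, a, b, rfl⟩]

theorem finrank_adjoin_range_le_of_isPrime_radical_commutatorIdeal {K : Type*} [Field K]
    [Nonempty ι] {X : ι → Matrix m m R}
    (hX : ∀ M : ι → Matrix m m K, ∃ φ : R →+* K, ∀ i, φ.mapMatrix (X i) = M i)
    (hprime : (commutatorIdeal X).radical.IsPrime)
    {M : ι → Matrix m m K} (hM : ∀ i j, Commute (M i) (M j)) :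
    finrank K (Algebra.adjoin K (Set.range M)) ≤ Fintype.card m := by
  obtain ⟨i₀⟩ := ‹Nonempty ι›
  rcases isEmpty_or_nonempty m with _ | ⟨⟨c⟩⟩
  · simp [finrank_zero_of_subsingleton]
  let mkS := Ideal.Quotient.mk (commutatorIdeal X).radical
  let x := fun i => mkS.mapMatrix (X i)
  have hx : ∀ i j, Commute (x i) (x j) :=
    commutatorIdeal_le_ker_iff.mp (Ideal.le_radical.trans_eq Ideal.mk_ker.symm)
  have point {N : ι → Matrix m m K} (hN : ∀ i j, Commute (N i) (N j)) :
      ∃ φ : R ⧸ (commutatorIdeal X).radical →+* K, ∀ i, φ.mapMatrix (x i) = N i := by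
    obtain ⟨φ, hφ⟩ := hX N
    have hle : (commutatorIdeal X).radical ≤ RingHom.ker φ :=
      (RingHom.ker_isPrime φ).radical_le_iff.mpr
        (commutatorIdeal_le_ker_iff.mpr fun i j => by simpa only [hφ] using hN i j)
    exact ⟨Ideal.Quotient.lift _ φ hle, hφ⟩
  obtain ⟨P, hP⟩ := exists_isCyclicVector_single K c
  obtain ⟨ψ, hψ⟩ := point (N := fun _ => P) fun _ _ => .refl P
  have hsingle : ψ ∘ Pi.single c 1 = Pi.single c 1 := by
    ext j
    simp [Pi.single_apply, apply_ite ψ]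
  have hcyc : IsCyclicVector (x i₀) (Pi.single c 1) :=
    .of_map ψ (by simpa [hψ i₀, hsingle] using hP)
  obtain ⟨φ, hφ⟩ := point hM
  have hxM : (fun i => φ.mapMatrix (x i)) = M := funext hφ
  exact hxM ▸ hcyc.finrank_adjoin_range_le φ (hx i₀)

end CommutingVariety

theorem dim_le_of_commuting_triples_variety_irreducible_general {k K m : Type*} [CommRing k]
    [Field K] [Algebra k K] [Fintype m] [DecidableEq m]
    (X Y Z : Matrix m m (MvPolynomial ((m × m) ⊕ (m × m) ⊕ (m × m)) k))
    (hX : ∀ i j, X i j = MvPolynomial.X (Sum.inl (i, j)))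
    (hY : ∀ i j, Y i j = MvPolynomial.X (Sum.inr (Sum.inl (i, j))))
    (hZ : ∀ i j, Z i j = MvPolynomial.X (Sum.inr (Sum.inr (i, j))))
    (I : Ideal (MvPolynomial ((m × m) ⊕ (m × m) ⊕ (m × m)) k))
    (hI : I = Ideal.span
      ({p | ∃ i j, p = (X * Y - Y * X) i j} ∪ {p | ∃ i j, p = (X * Z - Z * X) i j} ∪
        {p | ∃ i j, p = (Y * Z - Z * Y) i j}))
    (hprime : I.radical.IsPrime) :
    ∀ A B C : Matrix m m K, A * B = B * A → A * C = C * A → B * C = C * B →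
      finrank K (Algebra.adjoin K {A, B, C}) ≤ Fintype.card m := by
  intro A B C hAB hAC hBC
  have heval (M : Fin 3 → Matrix m m K) : ∃ φ : MvPolynomial ((m × m) ⊕ (m × m) ⊕ (m × m)) k →+* K,
      ∀ i, φ.mapMatrix (![X, Y, Z] i) = M i := by
    refine ⟨(MvPolynomial.aeval (R := k) (Sum.elim (fun q => M 0 q.1 q.2)
      (Sum.elim (fun q => M 1 q.1 q.2) fun q => M 2 q.1 q.2))).toRingHom, ?_⟩
    simp [Fin.forall_fin_succ, ← Matrix.ext_iff, hX, hY, hZ]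
  rw [hI, ← commutatorIdeal_vecCons_three] at hprime
  have hcomm : ∀ i j, Commute (![A, B, C] i) (![A, B, C] j) := by
    simp [Fin.forall_fin_succ, commute_iff_eq, hAB, hAC, hBC]
  have hrange : Set.range ![A, B, C] = {A, B, C} := by
    simp only [range_cons, range_empty, Set.union_empty, Set.singleton_union]
  exact hrange ▸
    finrank_adjoin_range_le_of_isPrime_radical_commutatorIdeal heval hprime hcomm

/-- If the variety `C(3,n)` of commuting triples of `n × n` matrices over an algebraically
closed field `F` is irreducible (the radical of the commutator-entries ideal is prime),
then every pairwise commuting triple of `n × n` matrices over `F` generates a subalgebra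
of dimension at most `n`. -/
theorem dim_le_of_commuting_triples_variety_irreducible (F : Type*) [Field F]
    [IsAlgClosed F] (n : ℕ) (hn : 1 ≤ n)
    (X Y Z : Matrix (Fin n) (Fin n)
      (MvPolynomial ((Fin n × Fin n) ⊕ (Fin n × Fin n) ⊕ (Fin n × Fin n)) F))
    (hX : ∀ i j, X i j = MvPolynomial.X (Sum.inl (i, j)))
    (hY : ∀ i j, Y i j = MvPolynomial.X (Sum.inr (Sum.inl (i, j))))
    (hZ : ∀ i j, Z i j = MvPolynomial.X (Sum.inr (Sum.inr (i, j))))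
    (I : Ideal (MvPolynomial ((Fin n × Fin n) ⊕ (Fin n × Fin n) ⊕ (Fin n × Fin n)) F))
    (hI : I = Ideal.span
      ({p | ∃ i j, p = (X * Y - Y * X) i j} ∪ {p | ∃ i j, p = (X * Z - Z * X) i j} ∪
        {p | ∃ i j, p = (Y * Z - Z * Y) i j}))
    (hprime : I.radical.IsPrime) :
    ∀ A B C : Matrix (Fin n) (Fin n) F,
      A * B = B * A → A * C = C * A → B * C = C * B →
      Module.finrank F ↥(Algebra.adjoin F {A, B, C}) ≤ n := by
  simpa using
    dim_le_of_commuting_triples_variety_irreducible_general (K := F) X Y Z hX hY hZ I hI hprime
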